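/- Let A and B be lattices with zero. Then A ⊠ B is a capped sub-tensor product of A and B: every element of A ⊠ B is a finitely generated bi-ideal of A × B that is a finite union of pure tensors; A ⊠ B contains all mixed tensors; A ⊠ B is closed under binary intersection; and, ordered by containment, A ⊠ B is a lattice. Moreover, A ⊠ B is the smallest capped sub-tensor product of A and B with respect to containment: every capped sub-tensor product C of A and B satisfies A ⊠ B ⊆ C. -/

import Mathlib

/-!
Everything rests on the identity
`(a ⊗ b) ∩ (c □ d) = ((a ⊓ c) ⊗ b) ∪ (a ⊗ (b ⊓ d))`,
whose right-hand side is a mixed tensor. It presents a confined element `H ⊆ a ⊗ b` of the box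
product as a finite intersection of mixed tensors, so `H` lies in every family that contains the
mixed tensors and is closed under intersection. The finite unions of pure tensors form such a
family, because `(a ⊗ b) ∩ (c ⊗ d) = (a ⊓ c) ⊗ (b ⊓ d)`; hence `A ⊠ B` is capped.

For joins, a finite set `G` lies in `a □ b` iff it has a subset `S` whose first coordinates are
below `a`, the second coordinates of `G \ S` being below `b`. Hence all the boxes containing
`G` have the same intersection as the finitely many boxes `(⋁_{p ∈ S} p.1) □ (⋁_{p ∈ G \ S} p.2)`,
and this intersection is the least element of the box product containing `G`. The join of `H` and
`K` is obtained by taking for `G` the generators of both.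
-/

variable (A B : Type*) [Lattice A] [OrderBot A] [Lattice B] [OrderBot B]

/-- `⊥_{A,B} = (A × {0}) ∪ ({0} × B)`. -/
def botPairs : Set (A × B) := {p | p.1 = ⊥ ∨ p.2 = ⊥}

/-- A bi-ideal of `A × B`. -/
def IsBiIdeal (I : Set (A × B)) : Prop :=
  (∀ p q : A × B, p.1 ≤ q.1 → p.2 ≤ q.2 → q ∈ I → p ∈ I) ∧
  botPairs A B ⊆ I ∧
  (∀ (a : A) (b₀ b₁ : B), (a, b₀) ∈ I → (a, b₁) ∈ I → (a, b₀ ⊔ b₁) ∈ I) ∧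
  (∀ (a₀ a₁ : A) (b : B), (a₀, b) ∈ I → (a₁, b) ∈ I → (a₀ ⊔ a₁, b) ∈ I)

/-- A finitely generated bi-ideal: the least bi-ideal containing some finite
subset of `A × B`. -/
def IsFGBiIdeal (J : Set (A × B)) : Prop :=
  ∃ F : Finset (A × B),
    IsLeast {I : Set (A × B) | IsBiIdeal A B I ∧ ↑F ⊆ I} J

/-- The pure tensor `a ⊗ b = ⊥_{A,B} ∪ {(x,y) : x ≤ a and y ≤ b}`. -/
def pureT (a : A) (b : B) : Set (A × B) :=
  {p | p.1 ≤ a ∧ p.2 ≤ b} ∪ botPairs A B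

/-- A sub-tensor product of `A` and `B`: a set of finitely generated bi-ideals
containing all mixed tensors, closed under binary intersection, and forming a
lattice with respect to containment. -/
def SubTensorProd (C : Set (Set (A × B))) : Prop :=
  (∀ X ∈ C, IsFGBiIdeal A B X) ∧
  (∀ (a₀ a₁ : A) (b₀ b₁ : B), a₀ ≤ a₁ → b₁ ≤ b₀ →
    pureT A B a₀ b₀ ∪ pureT A B a₁ b₁ ∈ C) ∧
  (∀ X ∈ C, ∀ Y ∈ C, X ∩ Y ∈ C) ∧
  (∀ X Y : {Z // Z ∈ C}, (∃ z, IsLUB {X, Y} z) ∧ (∃ w, IsGLB {X, Y} w))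

/-- A set of bi-ideals is capped if each of its members is a finite union of
pure tensors. -/
def Capped (C : Set (Set (A × B))) : Prop :=
  ∀ X ∈ C, ∃ F : Finset (A × B), X = ⋃ p ∈ F, pureT A B p.1 p.2

/-- `a □ b = {(x,y) : x ≤ a or y ≤ b}`. -/
def boxe (a : A) (b : B) : Set (A × B) := {p | p.1 ≤ a ∨ p.2 ≤ b}

/-- The box product `A □ B`: all finite nonempty intersections `⋂ (aᵢ □ bᵢ)`. -/
def boxProd : Set (Set (A × B)) :=
  {H | ∃ F : Finset (A × B), F.Nonempty ∧ H = ⋂ p ∈ F, boxe A B p.1 p.2}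

/-- The lattice tensor product `A ⊠ B`: the confined elements of `A □ B`
(here, since `A` and `B` have zero, `a ⊠ b = a ⊗ b` is the pure tensor). -/
def ltens : Set (Set (A × B)) :=
  {H | H ∈ boxProd A B ∧ ∃ (a : A) (b : B), H ⊆ pureT A B a b}

section Box

variable {α β : Type*} [Lattice α] [Lattice β]

lemma boxe_subset_boxe {a a' : α} {b b' : β} (ha : a ≤ a') (hb : b ≤ b') :
    boxe α β a b ⊆ boxe α β a' b' :=
  fun _ => Or.imp (le_trans · ha) (le_trans · hb)

lemma boxe_mem_boxProd (a : α) (b : β) : boxe α β a b ∈ boxProd α β :=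
  ⟨{(a, b)}, by simp⟩

lemma inter_mem_boxProd {H K : Set (α × β)} (hH : H ∈ boxProd α β) (hK : K ∈ boxProd α β) :
    H ∩ K ∈ boxProd α β := by
  classical
  obtain ⟨F, hF, rfl⟩ := hH
  obtain ⟨G, -, rfl⟩ := hK
  exact ⟨F ∪ G, hF.mono Finset.subset_union_left, (Finset.set_biInter_inter F G _).symm⟩

/-- The box hull of `X`: the intersection of all boxes containing `X`. When `X` is finite it is the
least element of `A □ B` containing `X`. The join of `H` and `K` in `A ⊠ B` is the box hull of
`H ∪ K`. -/
def boxHull (X : Set (α × β)) : Set (α × β) :=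
  {q | ∀ (a : α) (b : β), X ⊆ boxe α β a b → q ∈ boxe α β a b}

lemma boxHull_subset_boxe {X : Set (α × β)} {a : α} {b : β} (h : X ⊆ boxe α β a b) :
    boxHull X ⊆ boxe α β a b :=
  fun _ hq => hq a b h

lemma boxHull_subset_iff {X H : Set (α × β)} (hH : H ∈ boxProd α β) :
    boxHull X ⊆ H ↔ X ⊆ H := by
  refine ⟨fun h q hq => h fun _ _ hX => hX hq, fun h => ?_⟩
  obtain ⟨F, -, rfl⟩ := hH
  rw [Set.subset_iInter₂_iff] at h ⊢
  exact fun p hp => boxHull_subset_boxe (h p hp)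

end Box

variable {A B}

lemma IsBiIdeal.iInter {ι : Sort*} {I : ι → Set (A × B)} (hI : ∀ i, IsBiIdeal A B (I i)) :
    IsBiIdeal A B (⋂ i, I i) := by
  simp only [IsBiIdeal, Set.mem_iInter, Set.subset_iInter_iff]
  exact ⟨fun p q h₁ h₂ hq i => (hI i).1 p q h₁ h₂ (hq i),
    fun i => (hI i).2.1,
    fun a b₀ b₁ h₀ h₁ i => (hI i).2.2.1 a b₀ b₁ (h₀ i) (h₁ i),
    fun a₀ a₁ b h₀ h₁ i => (hI i).2.2.2 a₀ a₁ b (h₀ i) (h₁ i)⟩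

lemma mem_pureT_self (a : A) (b : B) : (a, b) ∈ pureT A B a b := Or.inl ⟨le_rfl, le_rfl⟩

lemma IsBiIdeal.pureT_subset_iff {I : Set (A × B)} (hI : IsBiIdeal A B I) {a : A} {b : B} :
    pureT A B a b ⊆ I ↔ (a, b) ∈ I := by
  refine ⟨fun h => h (mem_pureT_self a b), fun hab => Set.union_subset ?_ hI.2.1⟩
  exact fun q ⟨h₁, h₂⟩ => hI.1 q (a, b) h₁ h₂ hab

lemma IsBiIdeal.iUnion_pureT_subset_iff {I : Set (A × B)} (hI : IsBiIdeal A B I)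
    {G : Set (A × B)} : ⋃ p ∈ G, pureT A B p.1 p.2 ⊆ I ↔ G ⊆ I := by
  simp only [Set.iUnion_subset_iff, hI.pureT_subset_iff]
  rfl

lemma IsBiIdeal.isFGBiIdeal_iUnion_pureT {F : Finset (A × B)}
    (hF : IsBiIdeal A B (⋃ p ∈ F, pureT A B p.1 p.2)) :
    IsFGBiIdeal A B (⋃ p ∈ F, pureT A B p.1 p.2) :=
  ⟨F, ⟨hF, hF.iUnion_pureT_subset_iff.1 subset_rfl⟩,
    fun _ ⟨hI, hFI⟩ => hI.iUnion_pureT_subset_iff.2 hFI⟩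

lemma isBiIdeal_boxe (a : A) (b : B) : IsBiIdeal A B (boxe A B a b) := by
  refine ⟨?lower, ?bot, ?supRight, ?supLeft⟩
  case lower => exact fun p q h₁ h₂ => Or.imp h₁.trans h₂.trans
  case bot => exact fun p => Or.imp (·.trans_le bot_le) (·.trans_le bot_le)
  case supRight =>
    rintro x y₀ y₁ (hx | hy₀) (hx | hy₁)
    exacts [Or.inl hx, Or.inl hx, Or.inl hx, Or.inr (sup_le hy₀ hy₁)]
  case supLeft =>
    rintro x₀ x₁ y (hx₀ | hy) (hx₁ | hy)
    exacts [Or.inl (sup_le hx₀ hx₁), Or.inr hy, Or.inr hy, Or.inr hy]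

lemma boxe_bot_inter_boxe_bot (a : A) (b : B) :
    boxe A B a ⊥ ∩ boxe A B ⊥ b = pureT A B a b := by
  ext ⟨x, y⟩
  have hx : x = ⊥ → x ≤ a := fun h => h.trans_le bot_le
  have hy : y = ⊥ → y ≤ b := fun h => h.trans_le bot_le
  simp only [pureT, botPairs, boxe, Set.mem_inter_iff, Set.mem_union, Set.mem_ofPred_eq,
    le_bot_iff]
  tauto

lemma pureT_inter_boxe (a c : A) (b d : B) :
    pureT A B a b ∩ boxe A B c d = pureT A B (a ⊓ c) b ∪ pureT A B a (b ⊓ d) := by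
  ext ⟨x, y⟩
  have hbot : (x, y) ∈ botPairs A B → x ≤ c ∨ y ≤ d := fun h => (isBiIdeal_boxe c d).2.1 h
  simp only [pureT, boxe, Set.mem_inter_iff, Set.mem_union, Set.mem_ofPred_eq, le_inf_iff]
  tauto

lemma pureT_inter_pureT (a c : A) (b d : B) :
    pureT A B a b ∩ pureT A B c d = pureT A B (a ⊓ c) (b ⊓ d) := by
  simp only [pureT, ← Set.inter_union_distrib_right]
  congr 1
  ext ⟨x, y⟩
  simp only [Set.mem_inter_iff, Set.mem_ofPred_eq, le_inf_iff]
  tauto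

lemma isBiIdeal_of_mem_boxProd {H : Set (A × B)} (hH : H ∈ boxProd A B) : IsBiIdeal A B H := by
  obtain ⟨F, -, rfl⟩ := hH
  exact .iInter fun p => .iInter fun _ => isBiIdeal_boxe p.1 p.2

lemma inter_mem_ltens_of_mem_boxProd {H K : Set (A × B)} (hH : H ∈ ltens A B)
    (hK : K ∈ boxProd A B) : H ∩ K ∈ ltens A B := by
  obtain ⟨hH, a, b, hab⟩ := hH
  exact ⟨inter_mem_boxProd hH hK, a, b, Set.inter_subset_left.trans hab⟩

lemma pureT_mem_ltens (a : A) (b : B) : pureT A B a b ∈ ltens A B := by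
  refine ⟨?_, a, b, subset_rfl⟩
  rw [← boxe_bot_inter_boxe_bot]
  exact inter_mem_boxProd (boxe_mem_boxProd a ⊥) (boxe_mem_boxProd ⊥ b)

lemma mixed_mem_ltens {a₀ a₁ : A} {b₀ b₁ : B} (ha : a₀ ≤ a₁) (hb : b₁ ≤ b₀) :
    pureT A B a₀ b₀ ∪ pureT A B a₁ b₁ ∈ ltens A B := by
  have hcut := pureT_inter_boxe a₁ a₀ b₀ b₁
  rw [inf_eq_right.2 ha, inf_eq_right.2 hb] at hcut
  rw [← hcut]
  exact inter_mem_ltens_of_mem_boxProd (pureT_mem_ltens a₁ b₀) (boxe_mem_boxProd a₀ b₁)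

lemma ltens_subset_of_mixed_mem_of_inter_mem {C : Set (Set (A × B))}
    (hmixed : ∀ (a₀ a₁ : A) (b₀ b₁ : B), a₀ ≤ a₁ → b₁ ≤ b₀ →
      pureT A B a₀ b₀ ∪ pureT A B a₁ b₁ ∈ C)
    (hinter : ∀ X ∈ C, ∀ Y ∈ C, X ∩ Y ∈ C) : ltens A B ⊆ C := by
  classical
  rintro H ⟨⟨F, -, rfl⟩, a, b, hab⟩
  rw [← Set.inter_eq_right.2 hab]
  clear hab
  induction F using Finset.induction_on with
  | empty => simpa using hmixed a a b b le_rfl le_rfl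
  | insert p F _ ih =>
    rw [Finset.set_biInter_insert, Set.inter_inter_distrib_left, pureT_inter_boxe]
    exact hinter _ (hmixed _ _ _ _ inf_le_left inf_le_left) _ ih

open scoped FinsetFamily in
lemma iUnion_pureT_inter_iUnion_pureT [DecidableEq A] [DecidableEq B] (F G : Finset (A × B)) :
    (⋃ p ∈ F, pureT A B p.1 p.2) ∩ ⋃ q ∈ G, pureT A B q.1 q.2 =
      ⋃ r ∈ F ⊼ G, pureT A B r.1 r.2 := by
  ext x
  simp only [Set.iUnion₂_inter, Set.inter_iUnion₂, pureT_inter_pureT, Set.mem_iUnion, exists_prop,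
    Finset.mem_infs]
  constructor
  · rintro ⟨q, hq, p, hp, hx⟩
    exact ⟨p ⊓ q, ⟨p, hp, q, hq, rfl⟩, hx⟩
  · rintro ⟨_, ⟨p, hp, q, hq, rfl⟩, hx⟩
    exact ⟨q, hq, p, hp, hx⟩

lemma capped_ltens : Capped A B (ltens A B) := by
  classical
  apply ltens_subset_of_mixed_mem_of_inter_mem
    (C := {X | ∃ F : Finset (A × B), X = ⋃ p ∈ F, pureT A B p.1 p.2})
  · intro a₀ a₁ b₀ b₁ _ _
    exact ⟨{(a₀, b₀), (a₁, b₁)}, by rw [Finset.set_biUnion_insert, Finset.set_biUnion_singleton]⟩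
  · rintro _ ⟨F, rfl⟩ _ ⟨G, rfl⟩
    exact ⟨_, iUnion_pureT_inter_iUnion_pureT F G⟩

lemma isFGBiIdeal_of_mem_ltens {H : Set (A × B)} (hH : H ∈ ltens A B) : IsFGBiIdeal A B H := by
  have hI := isBiIdeal_of_mem_boxProd hH.1
  obtain ⟨F, rfl⟩ := capped_ltens H hH
  exact hI.isFGBiIdeal_iUnion_pureT

lemma boxHull_iUnion_pureT (G : Set (A × B)) :
    boxHull (⋃ p ∈ G, pureT A B p.1 p.2) = boxHull G := by
  simp only [boxHull, (isBiIdeal_boxe _ _).iUnion_pureT_subset_iff]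

lemma coe_subset_boxe_iff [DecidableEq A] [DecidableEq B] {G : Finset (A × B)} {a : A} {b : B} :
    ↑G ⊆ boxe A B a b ↔ ∃ S ⊆ G, S.sup Prod.fst ≤ a ∧ (G \ S).sup Prod.snd ≤ b := by
  classical
  simp only [Finset.sup_le_iff]
  constructor
  · intro h
    refine ⟨G.filter (·.1 ≤ a), Finset.filter_subset _ _, fun p hp => (Finset.mem_filter.1 hp).2,
      fun p hp => ?_⟩
    rw [← Finset.filter_not, Finset.mem_filter] at hp
    exact (h hp.1).resolve_left hp.2
  · rintro ⟨S, -, hfst, hsnd⟩ p hp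
    by_cases hpS : p ∈ S
    · exact Or.inl (hfst p hpS)
    · exact Or.inr (hsnd p (Finset.mem_sdiff.2 ⟨hp, hpS⟩))

lemma boxHull_coe_eq_iInter [DecidableEq A] [DecidableEq B] (G : Finset (A × B)) :
    boxHull (G : Set (A × B)) =
      ⋂ S ∈ G.powerset, boxe A B (S.sup Prod.fst) ((G \ S).sup Prod.snd) := by
  simp only [Finset.mem_powerset]
  apply subset_antisymm
  · exact Set.subset_iInter₂ fun S hS =>
      boxHull_subset_boxe (coe_subset_boxe_iff.2 ⟨S, hS, le_rfl, le_rfl⟩)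
  · intro q hq a b hG
    obtain ⟨S, hS, ha, hb⟩ := coe_subset_boxe_iff.1 hG
    exact boxe_subset_boxe ha hb (Set.mem_iInter₂.1 hq S hS)

lemma boxHull_coe_mem_boxProd (G : Finset (A × B)) :
    boxHull (G : Set (A × B)) ∈ boxProd A B := by
  classical
  refine ⟨G.powerset.image fun S => (S.sup Prod.fst, (G \ S).sup Prod.snd),
    G.powerset_nonempty.image _, ?_⟩
  rw [boxHull_coe_eq_iInter, Finset.set_biInter_finset_image]

lemma boxHull_coe_mem_ltens (G : Finset (A × B)) : boxHull (G : Set (A × B)) ∈ ltens A B := by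
  refine ⟨boxHull_coe_mem_boxProd G, G.sup Prod.fst, G.sup Prod.snd, ?_⟩
  rw [← boxe_bot_inter_boxe_bot]
  exact Set.subset_inter
    (boxHull_subset_boxe fun p hp => Or.inl (Finset.le_sup (f := Prod.fst) hp))
    (boxHull_subset_boxe fun p hp => Or.inr (Finset.le_sup (f := Prod.snd) hp))

lemma boxHull_union_mem_ltens {H K : Set (A × B)} (hH : H ∈ ltens A B) (hK : K ∈ ltens A B) :
    boxHull (H ∪ K) ∈ ltens A B := by
  classical
  obtain ⟨F, rfl⟩ := capped_ltens H hH
  obtain ⟨G, rfl⟩ := capped_ltens K hK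
  rw [← Finset.set_biUnion_union, ← Finset.set_biUnion_coe, boxHull_iUnion_pureT]
  exact boxHull_coe_mem_ltens (F ∪ G)

lemma exists_isLUB_ltens (H K : {X // X ∈ ltens A B}) : ∃ Z, IsLUB {H, K} Z := by
  refine ⟨⟨boxHull (H.1 ∪ K.1), boxHull_union_mem_ltens H.2 K.2⟩, ?_⟩
  rw [isLUB_iff_le_iff]
  intro W
  rw [upperBounds_insert, upperBounds_singleton]
  exact (boxHull_subset_iff W.2.1).trans Set.union_subset_iff

lemma exists_isGLB_ltens (H K : {X // X ∈ ltens A B}) : ∃ Z, IsGLB {H, K} Z := by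
  refine ⟨⟨H.1 ∩ K.1, inter_mem_ltens_of_mem_boxProd H.2 K.2.1⟩, ?_⟩
  rw [isGLB_iff_le_iff]
  intro W
  rw [lowerBounds_insert, lowerBounds_singleton]
  exact Set.subset_inter_iff

lemma subTensorProd_ltens : SubTensorProd A B (ltens A B) :=
  ⟨fun _ => isFGBiIdeal_of_mem_ltens,
    fun _ _ _ _ => mixed_mem_ltens,
    fun _ hH _ hK => inter_mem_ltens_of_mem_boxProd hH hK.1,
    fun H K => ⟨exists_isLUB_ltens H K, exists_isGLB_ltens H K⟩⟩

variable (A B)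

theorem ltens_smallest_capped_subTensorProd_general :
    SubTensorProd A B (ltens A B) ∧ Capped A B (ltens A B) ∧
    (∀ C : Set (Set (A × B)),
      (∀ (a₀ a₁ : A) (b₀ b₁ : B), a₀ ≤ a₁ → b₁ ≤ b₀ →
        pureT A B a₀ b₀ ∪ pureT A B a₁ b₁ ∈ C) →
      (∀ X ∈ C, ∀ Y ∈ C, X ∩ Y ∈ C) → ltens A B ⊆ C) :=
  ⟨subTensorProd_ltens, capped_ltens, fun _ => ltens_subset_of_mixed_mem_of_inter_mem⟩

/-- For lattices `A` and `B` with zero, `A ⊠ B` is a capped sub-tensor product of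
`A` and `B`, and it is the smallest one with respect to containment. -/
theorem ltens_smallest_capped_subTensorProd :
    (∀ H ∈ ltens A B, IsFGBiIdeal A B H ∧
      ∃ F : Finset (A × B), H = ⋃ p ∈ F, pureT A B p.1 p.2) ∧
    (∀ (a₀ a₁ : A) (b₀ b₁ : B), a₀ ≤ a₁ → b₁ ≤ b₀ →
      pureT A B a₀ b₀ ∪ pureT A B a₁ b₁ ∈ ltens A B) ∧
    (∀ H ∈ ltens A B, ∀ K ∈ ltens A B, H ∩ K ∈ ltens A B) ∧
    (∀ H K : {X // X ∈ ltens A B}, (∃ z, IsLUB {H, K} z) ∧ (∃ w, IsGLB {H, K} w)) ∧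
    (∀ C : Set (Set (A × B)), SubTensorProd A B C → Capped A B C → ltens A B ⊆ C) := by
  obtain ⟨⟨hfg, hmixed, hinter, hlattice⟩, hcapped, hleast⟩ :=
    ltens_smallest_capped_subTensorProd_general A B
  exact ⟨fun H hH => ⟨hfg H hH, hcapped H hH⟩, hmixed, hinter, hlattice,
    fun C hC _ => hleast C hC.2.1 hC.2.2.1⟩
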